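/- Let k ≥ 1 be a fixed integer and let K_n, P_n be scalings with K_n ≥ 2 for all sufficiently large n. Define α_n by K_n²/P_n = (ln n + (k−1)·ln ln n + α_n)/n. Assume that either there exists ε > 0 with n·K_n²/P_n > ε for all sufficiently large n, or lim_{n→∞} n·K_n²/P_n = 0. If lim_{n→∞} α_n = −∞, then P[G(n,K_n,P_n) is k-connected] → 0 as n → ∞. -/

import Mathlib

open MeasureTheory Filter Asymptotics
open scoped ENNReal

noncomputable section

/-- Key rings: `K`-element subsets of a key pool of size `P`. -/
abbrev KeyRing (P K : ℕ) : Type := {s : Finset (Fin P) // s.card = K}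

instance (P K : ℕ) : MeasurableSpace (KeyRing P K) := ⊤

/-- The uniform probability measure on key rings. -/
def uniformKeyMeasure (P K : ℕ) : Measure (KeyRing P K) :=
  (Fintype.card (KeyRing P K) : ℝ≥0∞)⁻¹ • (Measure.count : Measure (KeyRing P K))

/-- The Bernoulli measure with parameter `p` on `Bool`. -/
def bern (p : ℝ) : Measure Bool :=
  ENNReal.ofReal p • Measure.dirac true + ENNReal.ofReal (1 - p) • Measure.dirac false

/-- Sample space underlying `𝔾_on(n, K, P, p)`: independent key rings for the `n`
nodes together with independent on/off channel states for each pair of nodes. -/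
abbrev GonSpace (n K P : ℕ) : Type :=
  (Fin n → KeyRing P K) × (Sym2 (Fin n) → Bool)

/-- The probability measure of the model `𝔾_on(n, K, P, p)`: the key rings of the
`n` nodes are independent and uniform, and the channels are independent
Bernoulli(`p`) variables, independent of the key rings. -/
def gonMeasure (n K P : ℕ) (p : ℝ) : Measure (GonSpace n K P) :=
  (Measure.pi fun _ : Fin n => uniformKeyMeasure P K).prod
    (Measure.pi fun _ : Sym2 (Fin n) => bern p)

/-- The random graph `𝔾_on`: an edge is present iff the key rings intersect and the
channel between the two nodes is on. -/
def gonGraph {n K P : ℕ} (ω : GonSpace n K P) : SimpleGraph (Fin n) where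
  Adj i j := i ≠ j ∧ ((ω.1 i).1 ∩ (ω.1 j).1).Nonempty ∧ ω.2 s(i, j) = true
  symm := by
    refine ⟨?_⟩
    rintro i j ⟨h1, h2, h3⟩
    exact ⟨h1.symm, by rwa [Finset.inter_comm], by rwa [Sym2.eq_swap]⟩
  loopless := ⟨fun i h => h.1 rfl⟩

/-- The random key graph `G(n, K, P)`: an edge is present iff the key rings intersect. -/
def rkgGraph {n K P : ℕ} (ω : Fin n → KeyRing P K) : SimpleGraph (Fin n) where
  Adj i j := i ≠ j ∧ ((ω i).1 ∩ (ω j).1).Nonempty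
  symm := by
    refine ⟨?_⟩
    rintro i j ⟨h1, h2⟩
    exact ⟨h1.symm, by rwa [Finset.inter_comm]⟩
  loopless := ⟨fun i h => h.1 rfl⟩

/-- The probability measure of the random key graph model. -/
def rkgMeasure (n K P : ℕ) : Measure (Fin n → KeyRing P K) :=
  Measure.pi fun _ : Fin n => uniformKeyMeasure P K

/-- Degree of a vertex. -/
def gDeg {V : Type*} (G : SimpleGraph V) (v : V) : ℕ := Nat.card {w // G.Adj v w}

/-- Minimum vertex degree. -/
def minDeg {V : Type*} (G : SimpleGraph V) : ℕ := sInf (Set.range (gDeg G))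

/-- A graph is `k`-connected if it remains connected after the removal of any
`k - 1` of its vertices. -/
def KConnected {V : Type*} (G : SimpleGraph V) (k : ℕ) : Prop :=
  ∀ S : Finset V, S.card ≤ k - 1 → (G.induce ((S : Set V)ᶜ)).Connected

/-- Vertex connectivity: the least number of vertices whose deletion disconnects
the graph. -/
def vertexConn {V : Type*} (G : SimpleGraph V) : ℕ :=
  sInf {m | ∃ S : Finset V, S.card = m ∧ ¬ (G.induce ((S : Set V)ᶜ)).Connected}

/-- `p_s`: the probability that two key rings share at least one key. -/
def psf (K P : ℕ) : ℝ :=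
  if 2 * K ≤ P then 1 - (Nat.choose (P - K) K : ℝ) / (Nat.choose P K : ℝ) else 1

/-- `p_e = p · p_s`: the probability of an edge in `𝔾_on`. -/
def pef (K P : ℕ) (p : ℝ) : ℝ := p * psf K P

/-- The event `D_{x,ℓ}` that the node with index `x` has degree exactly `ℓ`. -/
def degEvent (n K P : ℕ) (x ℓ : ℕ) : Set (GonSpace n K P) :=
  {ω | ∃ hx : x < n, gDeg (gonGraph ω) ⟨x, hx⟩ = ℓ}

/-- The event `E_{xy}` that the edge between the nodes with indices `x`, `y` is present. -/
def edgeEvent (n K P : ℕ) (x y : ℕ) : Set (GonSpace n K P) :=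
  {ω | ∃ (hx : x < n) (hy : y < n), (gonGraph ω).Adj ⟨x, hx⟩ ⟨y, hy⟩}

/-- The event that the key rings of nodes `x` and `y` share exactly `u` keys. -/
def interCardEvent (n K P : ℕ) (x y u : ℕ) : Set (GonSpace n K P) :=
  {ω | ∃ (hx : x < n) (hy : y < n), ((ω.1 ⟨x, hx⟩).1 ∩ (ω.1 ⟨y, hy⟩).1).card = u}

/-- The event `K_{xy}` that the key rings of nodes `x` and `y` share at least one key. -/
def keyShareEvent (n K P : ℕ) (x y : ℕ) : Set (GonSpace n K P) :=
  {ω | ∃ (hx : x < n) (hy : y < n), ((ω.1 ⟨x, hx⟩).1 ∩ (ω.1 ⟨y, hy⟩).1).Nonempty}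

/-- `r_n = min(⌊P/K⌋, ⌊n/2⌋)`. -/
def rn (n K P : ℕ) : ℕ := min (P / K) (n / 2)

/-- The threshold array `J`. -/
def Jarr (n K P : ℕ) (ε lam mu : ℝ) (i : ℕ) : ℕ :=
  if i ≤ rn n K P then max ⌊(1 + ε) * (K : ℝ)⌋₊ ⌊lam * (K : ℝ) * (i : ℝ)⌋₊
  else ⌊mu * (P : ℝ)⌋₊

/-- The event `𝓔(J)`: some set `T` of at least two nodes has a union of key rings of
size at most `J_{|T|}`. -/
def EJ (n K P : ℕ) (ε lam mu : ℝ) : Set (GonSpace n K P) :=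
  {ω | ∃ T : Finset (Fin n), 2 ≤ T.card ∧
    (T.biUnion fun i => (ω.1 i).1).card ≤ Jarr n K P ε lam mu T.card}

/-- A second moment bound for the number of zeros of a function on a finite set. -/
theorem card_zeros_le_of_second_moment {Ω : Type*} [Fintype Ω] (X : Ω → ℝ) {m c : ℝ} (hm : 0 < m)
    (h1 : ∑ ω, X ω = Fintype.card Ω * m)
    (h2 : ∑ ω, X ω ^ 2 ≤ Fintype.card Ω * (m + c * m ^ 2)) :
    (({ω | X ω = 0} : Set Ω).ncard : ℝ) ≤ Fintype.card Ω * (1 / m + (c - 1)) := by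
  classical
  have hcard : ({ω | X ω = 0} : Set Ω).ncard = (Finset.univ.filter fun ω => X ω = 0).card := by
    rw [← Set.ncard_coe_finset]; congr 1; ext; simp
  rw [hcard]
  have hdev : ∑ ω, (X ω - m) ^ 2 ≤ Fintype.card Ω * (m + (c - 1) * m ^ 2) := by
    have : ∑ ω, (X ω - m) ^ 2 = ∑ ω, X ω ^ 2 - 2 * m * ∑ ω, X ω + Fintype.card Ω * m ^ 2 := by
      simp only [sub_sq, Finset.sum_add_distrib, Finset.sum_sub_distrib, Finset.sum_const,
        Finset.card_univ, nsmul_eq_mul, Finset.mul_sum]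
      congr 2
      exact Finset.sum_congr rfl fun _ _ => by ring
    rw [this, h1]; nlinarith
  have hlow : ((Finset.univ.filter fun ω => X ω = 0).card : ℝ) * m ^ 2 ≤ ∑ ω, (X ω - m) ^ 2 := by
    calc _ = ∑ ω ∈ Finset.univ.filter (fun ω => X ω = 0), (X ω - m) ^ 2 := by
          rw [Finset.sum_congr rfl (g := fun _ => m ^ 2)]
          · simp
          · intro ω hω
            rw [(Finset.mem_filter.1 hω).2]; ring
      _ ≤ _ := Finset.sum_le_sum_of_subset_of_nonneg (Finset.filter_subset _ _)
          fun _ _ _ => sq_nonneg _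
  have hm2 : 0 < m ^ 2 := by positivity
  refine le_of_mul_le_mul_right ((hlow.trans hdev).trans_eq ?_) hm2
  field_simp

theorem prod_ite_mem_eq_pow {V R : Type*} [DecidableEq V] [CommMonoid R] {S A : Finset V}
    (hA : A ⊆ S) (x y : R) :
    ∏ w ∈ S, (if w ∈ A then x else y) = x ^ A.card * y ^ (S.card - A.card) := by
  rw [Finset.prod_ite, Finset.prod_const, Finset.prod_const, Finset.filter_mem_eq_inter,
    Finset.inter_eq_right.2 hA, ← Finset.sdiff_eq_filter, Finset.card_sdiff_of_subset hA]

section HomogeneousRelation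

variable {V Q : Type*} [Fintype V] [DecidableEq V] [Fintype Q]

open Classical in
/-- The configurations for which the set of elements other than `v` related to `v` is `A`. -/
def nbhdEvent (T : Q → Q → Prop) (v : V) (A : Finset V) : Finset (V → Q) :=
  Finset.univ.filter fun ω => ∀ w, w ≠ v → (T (ω v) (ω w) ↔ w ∈ A)

theorem mem_nbhdEvent {T : Q → Q → Prop} {v : V} {A : Finset V} {ω : V → Q} :
    ω ∈ nbhdEvent T v A ↔ ∀ w, w ≠ v → (T (ω v) (ω w) ↔ w ∈ A) := by
  simp [nbhdEvent]

open Classical in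
theorem card_filter_rel {T : Q → Q → Prop} {a : ℕ}
    (ha : ∀ s, (Finset.univ.filter fun t => ¬ T s t).card = a) (s : Q) :
    (Finset.univ.filter fun t => T s t).card = Fintype.card Q - a := by
  have := Finset.card_filter_add_card_filter_not (s := (Finset.univ : Finset Q)) (fun t => T s t)
  rw [ha s, Finset.card_univ] at this
  omega

open Classical in
theorem card_nbhdEvent {T : Q → Q → Prop} {a : ℕ}
    (ha : ∀ s, (Finset.univ.filter fun t => ¬ T s t).card = a) {v : V} {A : Finset V}
    (hv : v ∉ A) :
    (nbhdEvent T v A).card = Fintype.card Q *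
      ((Fintype.card Q - a) ^ A.card * a ^ (Fintype.card V - 1 - A.card)) := by
  have hfib : ∀ s : Q, ((nbhdEvent T v A).filter fun ω => ω v = s).card =
      (Fintype.card Q - a) ^ A.card * a ^ (Fintype.card V - 1 - A.card) := by
    intro s
    have : ((nbhdEvent T v A).filter fun ω => ω v = s) = Fintype.piFinset (fun w =>
        if w = v then {s} else Finset.univ.filter fun t => (T s t ↔ w ∈ A)) := by
      ext ω
      rw [Finset.mem_filter, mem_nbhdEvent, Fintype.mem_piFinset]
      constructor
      · rintro ⟨h, rfl⟩ w
        by_cases hw : w = v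
        · simp [hw]
        · simpa [hw] using h w hw
      · intro h
        have hs : ω v = s := by simpa using h v
        refine ⟨fun w hw => ?_, hs⟩
        rw [hs]
        simpa [hw] using h w
    rw [this, Fintype.card_piFinset, ← Finset.mul_prod_erase _ _ (Finset.mem_univ v)]
    have hA : A ⊆ Finset.univ.erase v := fun w hw =>
      Finset.mem_erase.2 ⟨fun h => hv (h ▸ hw), Finset.mem_univ _⟩
    rw [← Finset.card_univ (α := V), ← Finset.card_erase_of_mem (Finset.mem_univ v),
      ← prod_ite_mem_eq_pow hA]
    simp only [if_true, Finset.card_singleton, one_mul]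
    refine Finset.prod_congr rfl fun w hw => ?_
    rw [if_neg (Finset.ne_of_mem_erase hw)]
    split_ifs with h
    · simpa [h] using card_filter_rel ha s
    · simpa [h] using ha s
  rw [Finset.card_eq_sum_card_fiberwise (f := fun ω => ω v) (t := Finset.univ)
    (fun _ _ => Finset.mem_coe.2 (Finset.mem_univ _))]
  rw [Finset.sum_congr rfl fun s _ => hfib s]
  simp

open Classical in
theorem card_filter_rel_iff_le {T : Q → Q → Prop} {a : ℕ} {q : ℝ}
    (ha : ∀ s, (Finset.univ.filter fun t => ¬ T s t).card = a)
    (haa : ∀ s s', ¬ T s s' → (Finset.univ.filter fun t => ¬ T s t ∧ ¬ T s' t).card *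
      Fintype.card Q ≤ a ^ 2)
    (hq0 : 0 < q) (hq1 : q ≤ 1) (hq : (a : ℝ) = Fintype.card Q * q)
    {s s' : Q} (hs : ¬ T s s') (B C : Prop) [Decidable B] [Decidable C] :
    ((Finset.univ.filter fun t => (T s t ↔ B) ∧ (T s' t ↔ C)).card : ℝ) ≤
      Fintype.card Q * ((if B then (1 - q) / q else q) * (if C then (1 - q) / q else q)) := by
  have hN : (0 : ℝ) < Fintype.card Q := by
    have : Nonempty Q := ⟨s⟩
    exact_mod_cast Fintype.card_pos
  have hp : (0 : ℝ) ≤ 1 - q := by linarith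
  have htouch : ∀ s, ((Finset.univ.filter fun t => T s t).card : ℝ) =
      Fintype.card Q * (1 - q) := by
    intro s
    have := Finset.card_filter_add_card_filter_not (s := (Finset.univ : Finset Q))
      (fun t => T s t)
    rw [ha s, Finset.card_univ] at this
    have h2 : ((Finset.univ.filter fun t => T s t).card : ℝ) + a = Fintype.card Q := by
      exact_mod_cast this
    linarith
  have hnone : ((Finset.univ.filter fun t => ¬ T s t ∧ ¬ T s' t).card : ℝ) ≤
      Fintype.card Q * (q * q) := by
    have h : ((Finset.univ.filter fun t => ¬ T s t ∧ ¬ T s' t).card : ℝ) * Fintype.card Q ≤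
      (a : ℝ) ^ 2 := by exact_mod_cast haa s s' hs
    rw [hq] at h
    refine le_of_mul_le_mul_right (h.trans_eq ?_) hN
    ring
  by_cases hB : B <;> by_cases hC : C <;> simp only [hB, hC, iff_true, iff_false, if_true, if_false]
  · have hunion : (Finset.univ.filter fun t => T s t ∧ T s' t).card + (a + a) =
        Fintype.card Q + (Finset.univ.filter fun t => ¬ T s t ∧ ¬ T s' t).card := by
      have h1 := Finset.card_union_add_card_inter (Finset.univ.filter fun t => ¬ T s t)
        (Finset.univ.filter fun t => ¬ T s' t)
      rw [ha, ha, ← Finset.filter_and, ← Finset.filter_or] at h1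
      have h2 := Finset.card_filter_add_card_filter_not (s := (Finset.univ : Finset Q))
        (fun t => T s t ∧ T s' t)
      simp only [not_and_or, Finset.card_univ] at h2
      omega
    have hunion' : ((Finset.univ.filter fun t => T s t ∧ T s' t).card : ℝ) + (a + a) =
        Fintype.card Q + (Finset.univ.filter fun t => ¬ T s t ∧ ¬ T s' t).card := by
      exact_mod_cast hunion
    have h3 : ((Finset.univ.filter fun t => T s t ∧ T s' t).card : ℝ) ≤
        Fintype.card Q * ((1 - q) * (1 - q)) := by
      nlinarith
    refine h3.trans ?_
    have : 1 - q ≤ (1 - q) / q := by rw [le_div_iff₀ hq0]; nlinarith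
    gcongr
  · rw [div_mul_cancel₀ _ hq0.ne', ← htouch s]
    exact_mod_cast Finset.card_le_card fun t ht => by simp_all
  · rw [mul_div_cancel₀ _ hq0.ne', ← htouch s']
    exact_mod_cast Finset.card_le_card fun t ht => by simp_all
  · exact hnone

open Classical in
theorem card_nbhdEvent_inter_le {T : Q → Q → Prop} {a j : ℕ} {q : ℝ}
    (ha : ∀ s, (Finset.univ.filter fun t => ¬ T s t).card = a)
    (haa : ∀ s s', ¬ T s s' → (Finset.univ.filter fun t => ¬ T s t ∧ ¬ T s' t).card *
      Fintype.card Q ≤ a ^ 2)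
    (hq0 : 0 < q) (hq1 : q ≤ 1) (hq : (a : ℝ) = Fintype.card Q * q)
    {v v' : V} (hvv : v ≠ v') {A A' : Finset V} (hA : A ⊆ (Finset.univ.erase v).erase v')
    (hA' : A' ⊆ (Finset.univ.erase v).erase v') (hj : A.card = j) (hj' : A'.card = j) :
    ((nbhdEvent T v A ∩ nbhdEvent T v' A').card : ℝ) ≤ (Fintype.card Q : ℝ) ^ Fintype.card V *
      (((1 - q) ^ j * q ^ (Fintype.card V - 1 - j)) ^ 2 / q ^ (2 * j + 1)) := by
  set D : Finset (Q × Q) := Finset.univ.filter fun x => ¬ T x.1 x.2 with hD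
  set F : Q × Q → V → Finset Q := fun x w => if w = v then {x.1} else if w = v' then {x.2} else
    Finset.univ.filter fun t => (T x.1 t ↔ w ∈ A) ∧ (T x.2 t ↔ w ∈ A') with hF
  set U : Finset V := (Finset.univ.erase v).erase v' with hU
  have hv'mem : v' ∈ Finset.univ.erase v := Finset.mem_erase.2 ⟨hvv.symm, Finset.mem_univ _⟩
  have hUcard : U.card + 2 = Fintype.card V := by
    have h1 := Finset.card_erase_add_one (Finset.mem_univ v)
    have h2 := Finset.card_erase_add_one hv'mem
    rw [Finset.card_univ] at h1
    rw [← hU] at h2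
    omega
  have hjU : j ≤ U.card := hj ▸ Finset.card_le_card hA
  have hsub : nbhdEvent T v A ∩ nbhdEvent T v' A' ⊆ D.biUnion fun x => Fintype.piFinset (F x) := by
    intro ω hω
    obtain ⟨h1, h2⟩ := Finset.mem_inter.1 hω
    rw [mem_nbhdEvent] at h1 h2
    refine Finset.mem_biUnion.2 ⟨(ω v, ω v'), ?_, ?_⟩
    · have : v' ∉ A := fun h => by simpa [hU] using hA h
      simpa [hD, this] using h1 v' hvv.symm
    · rw [Fintype.mem_piFinset]
      intro w
      by_cases hw : w = v
      · simp [hF, hw]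
      by_cases hw' : w = v'
      · simp [hF, hw', hvv.symm]
      simpa [hF, hw, hw'] using ⟨h1 w hw, h2 w hw'⟩
  have hDcard : D.card = Fintype.card Q * a := by
    rw [hD, Finset.card_eq_sum_card_fiberwise (f := Prod.fst) (t := Finset.univ)
      (fun _ _ => Finset.mem_coe.2 (Finset.mem_univ _)),
      Finset.sum_congr rfl (g := fun _ => a)]
    · simp
    · intro s _
      rw [← ha s]
      refine Finset.card_bij' (fun x _ => x.2) (fun t _ => (s, t)) ?_ ?_ ?_ ?_
      · rintro ⟨x, y⟩ h; simp at h ⊢; rw [← h.2]; exact h.1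
      · intro t h; simpa using h
      · rintro ⟨x, y⟩ h; simp at h ⊢; exact h.2.symm
      · intro t h; rfl
  have hfib : ∀ x ∈ D, ((Fintype.piFinset (F x)).card : ℝ) ≤
      (Fintype.card Q : ℝ) ^ U.card * (((1 - q) / q) ^ j * q ^ (U.card - j)) ^ 2 := by
    intro x hx
    have hx' : ¬ T x.1 x.2 := (Finset.mem_filter.1 hx).2
    rw [Fintype.card_piFinset, ← Finset.mul_prod_erase _ _ (Finset.mem_univ v),
      ← Finset.mul_prod_erase _ _ hv'mem, ← hU]
    have e1 : (F x v).card = 1 := by simp [hF]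
    have e2 : (F x v').card = 1 := by simp [hF, hvv.symm]
    rw [e1, e2, one_mul, one_mul, Nat.cast_prod]
    calc ∏ w ∈ U, ((F x w).card : ℝ)
        ≤ ∏ w ∈ U, (Fintype.card Q : ℝ) * ((if w ∈ A then (1 - q) / q else q) *
            (if w ∈ A' then (1 - q) / q else q)) := by
          refine Finset.prod_le_prod (fun _ _ => Nat.cast_nonneg _) fun w hw => ?_
          have hw1 : w ≠ v' := Finset.ne_of_mem_erase hw
          have hw2 : w ≠ v := Finset.ne_of_mem_erase (Finset.mem_of_mem_erase hw)
          simp only [hF, hw1, hw2, if_false]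
          convert card_filter_rel_iff_le ha haa hq0 hq1 hq hx' (w ∈ A) (w ∈ A')
      _ = _ := by
          rw [Finset.prod_mul_distrib, Finset.prod_mul_distrib, prod_ite_mem_eq_pow hA,
            prod_ite_mem_eq_pow hA', Finset.prod_const, hj, hj', sq]
  calc ((nbhdEvent T v A ∩ nbhdEvent T v' A').card : ℝ)
      ≤ ∑ x ∈ D, ((Fintype.piFinset (F x)).card : ℝ) := by
        exact_mod_cast (Finset.card_le_card hsub).trans Finset.card_biUnion_le
    _ ≤ D.card * ((Fintype.card Q : ℝ) ^ U.card *
          (((1 - q) / q) ^ j * q ^ (U.card - j)) ^ 2) := by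
        refine (Finset.sum_le_sum hfib).trans_eq ?_
        rw [Finset.sum_const, nsmul_eq_mul]
    _ = _ := by
        obtain ⟨d, hd⟩ := Nat.exists_eq_add_of_le hjU
        rw [hDcard, Nat.cast_mul, hq, ← hUcard, hd,
          show j + d - j = d by omega, show j + d + 2 - 1 - j = d + 1 by omega]
        have hqj : q ^ j ≠ 0 := (pow_pos hq0 j).ne'
        rw [div_pow, show q ^ (2 * j + 1) = q ^ j * q ^ j * q by ring, pow_succ q d]
        generalize q ^ j = u at hqj
        generalize (1 - q) ^ j = x
        field_simp
        ring

open Classical in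
/-- Second moment bound: few configurations have no element of a given set whose neighbourhood
is a `j`-element set disjoint from the given set. -/
theorem ncard_no_nbhdEvent_le {T : Q → Q → Prop} {a j : ℕ} {q : ℝ}
    (ha : ∀ s, (Finset.univ.filter fun t => ¬ T s t).card = a)
    (haa : ∀ s s', ¬ T s s' → (Finset.univ.filter fun t => ¬ T s t ∧ ¬ T s' t).card *
      Fintype.card Q ≤ a ^ 2)
    (hq0 : 0 < q) (hq1 : q ≤ 1) (hq : (a : ℝ) = Fintype.card Q * q) (V' : Finset V) {m : ℝ}
    (hjn : j < Fintype.card V)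
    (hm : m = V'.card * (V'ᶜ.card.choose j) * ((1 - q) ^ j * q ^ (Fintype.card V - 1 - j)))
    (hm0 : 0 < m) :
    (({ω | ∀ v ∈ V', ∀ A ⊆ V'ᶜ, A.card = j → ω ∉ nbhdEvent T v A} : Set (V → Q)).ncard : ℝ) ≤
      (Fintype.card Q : ℝ) ^ Fintype.card V * (1 / m + (1 / q ^ (2 * j + 1) - 1)) := by
  set I : Finset (V × Finset V) := V' ×ˢ (V'ᶜ).powersetCard j with hI
  set π : ℝ := (1 - q) ^ j * q ^ (Fintype.card V - 1 - j) with hπ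
  set X : (V → Q) → ℝ := fun ω => ∑ i ∈ I, if ω ∈ nbhdEvent T i.1 i.2 then 1 else 0 with hX
  have hmemI : ∀ {i}, i ∈ I → i.1 ∈ V' ∧ i.2 ⊆ V'ᶜ ∧ i.2.card = j := by
    intro i hi
    simpa [hI, Finset.mem_powersetCard] using hi
  have hnot : ∀ {i u}, i ∈ I → u ∈ V' → u ∉ i.2 := fun hi hu h =>
    Finset.mem_compl.1 ((hmemI hi).2.1 h) hu
  have hmI : m = I.card * π := by
    rw [hm, hI, Finset.card_product, Finset.card_powersetCard]; push_cast; ring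
  have hcardΩ : (Fintype.card (V → Q) : ℝ) = (Fintype.card Q : ℝ) ^ Fintype.card V := by
    rw [Fintype.card_fun]; push_cast; rfl
  have hle : a ≤ Fintype.card Q := by
    have : (a : ℝ) ≤ Fintype.card Q := by
      rw [hq]; exact mul_le_of_le_one_right (Nat.cast_nonneg _) hq1
    exact_mod_cast this
  have hsingle : ∀ i ∈ I, ((nbhdEvent T i.1 i.2).card : ℝ) =
      (Fintype.card Q : ℝ) ^ Fintype.card V * π := by
    intro i hi
    obtain ⟨h1, h2, h3⟩ := hmemI hi
    rw [card_nbhdEvent ha (hnot hi h1), h3]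
    push_cast [Nat.cast_sub hle]
    obtain ⟨d, hd⟩ := Nat.exists_eq_add_of_lt hjn
    rw [hπ, hq, hd, show j + d + 1 - 1 - j = d by omega,
      show (Fintype.card Q : ℝ) - Fintype.card Q * q = Fintype.card Q * (1 - q) by ring, mul_pow]
    ring
  have hind : ∀ S : Finset (V → Q), ∑ ω, (if ω ∈ S then (1 : ℝ) else 0) = S.card := by
    intro S; simp
  have h1 : ∑ ω, X ω = Fintype.card (V → Q) * m := by
    rw [hX, Finset.sum_comm]
    simp only [hind]
    rw [Finset.sum_congr rfl hsingle, hcardΩ, hmI]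
    simp only [Finset.sum_const, nsmul_eq_mul]
    ring
  have hpair : ∀ i ∈ I, ∀ i' ∈ I,
      ((nbhdEvent T i.1 i.2 ∩ nbhdEvent T i'.1 i'.2).card : ℝ) ≤
      (Fintype.card Q : ℝ) ^ Fintype.card V *
        ((if i = i' then π else 0) + π ^ 2 / q ^ (2 * j + 1)) := by
    intro i hi i' hi'
    obtain ⟨hv, hA, hj⟩ := hmemI hi
    obtain ⟨hv', hA', hj'⟩ := hmemI hi'
    have hpos : 0 ≤ π ^ 2 / q ^ (2 * j + 1) := by positivity
    by_cases hvv : i.1 = i'.1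
    · by_cases hii : i = i'
      · subst hii
        rw [Finset.inter_self, hsingle i hi, if_pos rfl]
        gcongr
        linarith
      · have hempty : nbhdEvent T i.1 i.2 ∩ nbhdEvent T i'.1 i'.2 = ∅ := by
          rw [Finset.eq_empty_iff_forall_notMem]
          intro ω hω
          obtain ⟨g1, g2⟩ := Finset.mem_inter.1 hω
          rw [mem_nbhdEvent] at g1 g2
          apply hii
          refine Prod.ext hvv (Finset.ext fun w => ?_)
          by_cases hw : w = i.1
          · rw [hw]
            exact ⟨fun h => absurd h (hnot hi hv), fun h => absurd h (hnot hi' hv)⟩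
          · rw [← g1 w hw, ← g2 w (hvv ▸ hw), hvv]
        rw [hempty, if_neg hii, zero_add]
        simp only [Finset.card_empty, Nat.cast_zero]
        positivity
    · rw [if_neg fun h => hvv (by rw [h]), zero_add]
      have hsub : ∀ {l}, l ∈ I → l.2 ⊆ (Finset.univ.erase i.1).erase i'.1 := by
        intro l hl w hw
        refine Finset.mem_erase.2 ⟨?_, Finset.mem_erase.2 ⟨?_, Finset.mem_univ _⟩⟩
        · rintro rfl; exact hnot hl hv' hw
        · rintro rfl; exact hnot hl hv hw
      exact card_nbhdEvent_inter_le ha haa hq0 hq1 hq hvv (hsub hi) (hsub hi') hj hj'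
  have h2 : ∑ ω, X ω ^ 2 ≤ Fintype.card (V → Q) * (m + 1 / q ^ (2 * j + 1) * m ^ 2) := by
    have hsq : ∀ ω, X ω ^ 2 = ∑ i ∈ I, ∑ i' ∈ I,
        if ω ∈ nbhdEvent T i.1 i.2 ∩ nbhdEvent T i'.1 i'.2 then (1 : ℝ) else 0 := by
      intro ω
      rw [hX, sq, Finset.sum_mul_sum]
      refine Finset.sum_congr rfl fun i _ => Finset.sum_congr rfl fun i' _ => ?_
      by_cases g1 : ω ∈ nbhdEvent T i.1 i.2 <;> by_cases g2 : ω ∈ nbhdEvent T i'.1 i'.2 <;>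
        simp [g1, g2]
    simp only [hsq]
    rw [Finset.sum_comm]
    calc ∑ i ∈ I, ∑ ω, ∑ i' ∈ I,
          (if ω ∈ nbhdEvent T i.1 i.2 ∩ nbhdEvent T i'.1 i'.2 then (1 : ℝ) else 0)
        = ∑ i ∈ I, ∑ i' ∈ I,
            ((nbhdEvent T i.1 i.2 ∩ nbhdEvent T i'.1 i'.2).card : ℝ) := by
          refine Finset.sum_congr rfl fun i _ => ?_
          rw [Finset.sum_comm]
          exact Finset.sum_congr rfl fun i' _ => hind _
      _ ≤ ∑ i ∈ I, ∑ i' ∈ I, (Fintype.card Q : ℝ) ^ Fintype.card V *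
            ((if i = i' then π else 0) + π ^ 2 / q ^ (2 * j + 1)) :=
          Finset.sum_le_sum fun i hi => Finset.sum_le_sum fun i' hi' => hpair i hi i' hi'
      _ = ∑ i ∈ I, (Fintype.card Q : ℝ) ^ Fintype.card V *
            (π + I.card * (π ^ 2 / q ^ (2 * j + 1))) := by
          refine Finset.sum_congr rfl fun i hi => ?_
          rw [← Finset.mul_sum, Finset.sum_add_distrib, Finset.sum_ite_eq, if_pos hi]
          simp
      _ = _ := by
          rw [hcardΩ, hmI, Finset.sum_const, nsmul_eq_mul]; ring
  have hzero := card_zeros_le_of_second_moment X hm0 h1 h2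
  rw [hcardΩ] at hzero
  refine le_trans ?_ hzero
  have hss : ({ω | ∀ v ∈ V', ∀ A ⊆ V'ᶜ, A.card = j → ω ∉ nbhdEvent T v A} : Set (V → Q)) ⊆
      {ω | X ω = 0} := by
    intro ω hω
    refine Finset.sum_eq_zero fun i hi => ?_
    obtain ⟨g1, g2, g3⟩ := hmemI hi
    rw [if_neg (hω _ g1 _ g2 g3)]
  exact_mod_cast Set.ncard_le_ncard hss (Set.toFinite _)

end HomogeneousRelation

/-- Log-concavity of the probability of avoiding a set of keys. -/
theorem choose_sub_mul_choose_le_sq (P K : ℕ) :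
    (P - 2 * K).choose K * P.choose K ≤ (P - K).choose K ^ 2 := by
  have h : (P - 2 * K).descFactorial K * P.descFactorial K ≤ (P - K).descFactorial K ^ 2 := by
    simp only [Nat.descFactorial_eq_prod_range]
    rw [← Finset.prod_mul_distrib, ← Finset.prod_pow]
    refine Finset.prod_le_prod (fun _ _ => Nat.zero_le _) fun i _ => ?_
    rcases Nat.le_total P (2 * K + i) with hP | hP
    · rw [show P - 2 * K - i = 0 by omega, zero_mul]; exact Nat.zero_le _
    · obtain ⟨d, rfl⟩ := Nat.exists_eq_add_of_le hP
      rw [show 2 * K + i + d - 2 * K - i = d by omega, show 2 * K + i + d - i = d + 2 * K by omega,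
        show 2 * K + i + d - K - i = d + K by omega]
      nlinarith
  simp only [Nat.descFactorial_eq_factorial_mul_choose] at h
  have hf : 0 < K.factorial ^ 2 := by positivity
  refine Nat.le_of_mul_le_mul_left ?_ hf
  calc _ = K.factorial * (P - 2 * K).choose K * (K.factorial * P.choose K) := by ring
    _ ≤ _ := h
    _ = _ := by ring

theorem choose_add_le (M K d : ℕ) :
    (M + d).choose (K + 1) ≤ M.choose (K + 1) + d * (M + d - 1).choose K := by
  induction d with
  | zero => simp
  | succ d ih =>
    rw [← add_assoc, Nat.choose_succ_succ, Nat.add_sub_cancel]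
    have : (M + d - 1).choose K ≤ (M + d).choose K := Nat.choose_le_choose _ (Nat.sub_le _ _)
    nlinarith

/-- Two key rings share a key with probability at most `K ^ 2 / P`. -/
theorem one_sub_choose_div_choose_le {P K : ℕ} (hK : 0 < K) (hKP : K ≤ P) :
    1 - ((P - K).choose K : ℝ) / (P.choose K : ℝ) ≤ (K : ℝ) ^ 2 / P := by
  have hN : (0 : ℝ) < P.choose K := by exact_mod_cast Nat.choose_pos hKP
  have hP : (0 : ℝ) < P := by exact_mod_cast hK.trans_le hKP
  obtain ⟨L, rfl⟩ := Nat.exists_eq_add_of_lt hK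
  obtain ⟨R, rfl⟩ : ∃ R, P = R + 1 := ⟨P - 1, by omega⟩
  rw [zero_add] at *
  have h1 := choose_add_le (R + 1 - (L + 1)) L (L + 1)
  rw [Nat.sub_add_cancel hKP, Nat.add_sub_cancel] at h1
  have h2 : ((R + 1 : ℕ) : ℝ) * R.choose L = (R + 1).choose (L + 1) * ((L + 1 : ℕ) : ℝ) := by
    exact_mod_cast Nat.add_one_mul_choose_eq R L
  have h3 : ((R + 1).choose (L + 1) : ℝ) ≤ (R + 1 - (L + 1) : ℕ).choose (L + 1) +
      ((L + 1 : ℕ) : ℝ) * R.choose L := by exact_mod_cast h1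
  rw [sub_le_iff_le_add, ← sub_le_iff_le_add', le_div_iff₀ hN, sub_mul, one_mul,
    div_mul_eq_mul_div, sub_le_iff_le_add, ← sub_le_iff_le_add', le_div_iff₀ hP]
  calc _ ≤ (((L + 1 : ℕ) : ℝ) * R.choose L) * ((R + 1 : ℕ) : ℝ) := by gcongr; linarith
    _ = ((L + 1 : ℕ) : ℝ) * (((R + 1 : ℕ) : ℝ) * R.choose L) := by ring
    _ = _ := by rw [h2]; ring

section KeyRing

variable {n K P : ℕ}

/-- Two key rings share a key. -/
def ShareKey (s t : KeyRing P K) : Prop := (s.1 ∩ t.1).Nonempty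

open Classical in
theorem card_keyRing_filter_subset (B : Finset (Fin P)) :
    (Finset.univ.filter fun t : KeyRing P K => t.1 ⊆ B).card = B.card.choose K := by
  rw [← Finset.card_powersetCard]
  refine Finset.card_bij (fun t _ => t.1) ?_ (fun _ _ _ _ h => Subtype.ext h) ?_
  · intro t ht
    exact Finset.mem_powersetCard.2 ⟨(Finset.mem_filter.1 ht).2, t.2⟩
  · intro s hs
    obtain ⟨h1, h2⟩ := Finset.mem_powersetCard.1 hs
    exact ⟨⟨s, h2⟩, by simpa using h1, rfl⟩

theorem card_keyRing : Fintype.card (KeyRing P K) = P.choose K := by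
  rw [Fintype.card_finset_len, Fintype.card_fin]

theorem not_shareKey_iff {s t : KeyRing P K} : ¬ ShareKey s t ↔ t.1 ⊆ s.1ᶜ := by
  rw [ShareKey, Finset.not_nonempty_iff_eq_empty, ← Finset.disjoint_iff_inter_eq_empty,
    Finset.subset_compl_comm, Finset.subset_compl_iff_disjoint_right]

open Classical in
theorem card_filter_not_shareKey (s : KeyRing P K) :
    (Finset.univ.filter fun t => ¬ ShareKey s t).card = (P - K).choose K := by
  simp only [not_shareKey_iff]
  rw [card_keyRing_filter_subset, Finset.card_compl, Fintype.card_fin, s.2]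

open Classical in
theorem card_filter_not_shareKey_pair {s s' : KeyRing P K} (h : ¬ ShareKey s s') :
    (Finset.univ.filter fun t => ¬ ShareKey s t ∧ ¬ ShareKey s' t).card =
      (P - 2 * K).choose K := by
  have hd : Disjoint s.1 s'.1 := by
    rwa [ShareKey, Finset.not_nonempty_iff_eq_empty, ← Finset.disjoint_iff_inter_eq_empty] at h
  simp only [not_shareKey_iff, ← Finset.subset_inter_iff, ← Finset.compl_union]
  rw [card_keyRing_filter_subset, Finset.card_compl, Fintype.card_fin,
    Finset.card_union_of_disjoint hd, s.2, s'.2, two_mul]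

theorem rkgMeasure_apply (hKP : K ≤ P) (E : Set (Fin n → KeyRing P K)) :
    rkgMeasure n K P E = ENNReal.ofReal
      ((E.ncard : ℝ) / (Fintype.card (KeyRing P K) : ℝ) ^ Fintype.card (Fin n)) := by
  classical
  have hN : 0 < Fintype.card (KeyRing P K) := by
    rw [card_keyRing]; exact Nat.choose_pos hKP
  have hmsc : MeasurableSingletonClass (KeyRing P K) := ⟨fun _ => trivial⟩
  have hsing : ∀ s : KeyRing P K, uniformKeyMeasure P K {s} =
      (Fintype.card (KeyRing P K) : ℝ≥0∞)⁻¹ := by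
    intro s; simp [uniformKeyMeasure]
  have hfin : IsFiniteMeasure (uniformKeyMeasure P K) := by
    constructor
    have h0 : (Fintype.card (KeyRing P K) : ℝ≥0∞)⁻¹ ≠ ∞ := by simpa using hN.ne'
    simp only [uniformKeyMeasure, Measure.smul_apply, smul_eq_mul]
    exact ENNReal.mul_lt_top h0.lt_top (Measure.count_apply_lt_top.2 Set.finite_univ)
  have hpt : ∀ ω : Fin n → KeyRing P K, rkgMeasure n K P {ω} =
      ((Fintype.card (KeyRing P K) : ℝ≥0∞)⁻¹) ^ Fintype.card (Fin n) := by
    intro ω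
    rw [rkgMeasure, Measure.pi_singleton]
    simp [hsing]
  have hE : E = ((Set.toFinite E).toFinset : Set (Fin n → KeyRing P K)) := by simp
  rw [Set.ncard_eq_toFinset_card E (Set.toFinite E)]
  conv_lhs => rw [hE]
  rw [← MeasureTheory.sum_measure_singleton]
  simp only [hpt, Finset.sum_const, nsmul_eq_mul]
  rw [ENNReal.ofReal_div_of_pos (by positivity), ENNReal.ofReal_natCast,
    ENNReal.ofReal_pow (by positivity), ENNReal.ofReal_natCast, div_eq_mul_inv, ENNReal.inv_pow]

/-- A vertex whose neighbourhood has fewer than `k` elements obstructs `k`-connectivity. -/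
theorem not_kConnected_of_neighbors {V : Type*} [Fintype V] {G : SimpleGraph V} {k : ℕ}
    {v : V} {A : Finset V} (hv : v ∉ A) (hA : A.card ≤ k - 1)
    (hcard : A.card + 1 < Fintype.card V) (hadj : ∀ w, G.Adj v w → w ∈ A) :
    ¬ KConnected G k := by
  classical
  intro h
  have hc := h A hA
  obtain ⟨w, hw⟩ : ∃ w, w ∉ insert v A := by
    by_contra! hall
    have h1 := Finset.card_le_card (fun w _ => hall w : Finset.univ ⊆ insert v A)
    rw [Finset.card_univ, Finset.card_insert_of_notMem hv] at h1
    omega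
  rw [Finset.mem_insert, not_or] at hw
  let x : ((A : Set V)ᶜ : Set V) := ⟨v, by simpa using hv⟩
  let y : ((A : Set V)ᶜ : Set V) := ⟨w, by simpa using hw.2⟩
  have hxy : x ≠ y := fun e => hw.1 (congrArg Subtype.val e).symm
  have : Nontrivial ((A : Set V)ᶜ : Set V) := ⟨x, y, hxy⟩
  obtain ⟨z, hz⟩ := hc.preconnected.exists_adj_of_nontrivial x
  exact z.2 (hadj _ hz)

theorem rkgMeasure_kConnected_le {k j : ℕ} {m q : ℝ} (hKP : K ≤ P) (hj : j ≤ k - 1)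
    (hjn : j + 1 < n) (hq : q = ((P - K).choose K : ℝ) / (P.choose K : ℝ)) (hq0 : 0 < q)
    (hm : m = (n / 2 : ℕ) * ((n - n / 2).choose j) * ((1 - q) ^ j * q ^ (n - 1 - j)))
    (hm0 : 0 < m) :
    rkgMeasure n K P {ω | KConnected (rkgGraph ω) k} ≤
      ENNReal.ofReal (1 / m + (1 / q ^ (2 * j + 1) - 1)) := by
  classical
  have hN : (0 : ℝ) < P.choose K := by exact_mod_cast Nat.choose_pos hKP
  have hq1 : q ≤ 1 := by
    rw [hq, div_le_one hN]
    exact_mod_cast Nat.choose_le_choose _ (Nat.sub_le _ _)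
  have haq : (((P - K).choose K : ℕ) : ℝ) = Fintype.card (KeyRing P K) * q := by
    rw [card_keyRing, hq, mul_div_cancel₀ _ hN.ne']
  set V' : Finset (Fin n) := Finset.univ.filter fun i => (i : ℕ) < n / 2 with hV'
  have hV'card : V'.card = n / 2 := by
    rw [hV', Fin.card_filter_val_lt]
    exact min_eq_right (Nat.div_le_self _ _)
  have hbound := ncard_no_nbhdEvent_le (T := ShareKey (P := P) (K := K)) (j := j)
    card_filter_not_shareKey
    (fun s s' h => by
      rw [card_filter_not_shareKey_pair h, card_keyRing]
      exact choose_sub_mul_choose_le_sq P K)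
    hq0 hq1 haq V' (m := m) (by rw [Fintype.card_fin]; omega)
    (by rw [hm, Finset.card_compl, hV'card, Fintype.card_fin]) hm0
  rw [rkgMeasure_apply hKP]
  refine ENNReal.ofReal_le_ofReal ?_
  rw [div_le_iff₀' (by rw [card_keyRing]; positivity)]
  refine le_trans ?_ hbound
  have hsub : {ω : Fin n → KeyRing P K | KConnected (rkgGraph ω) k} ⊆
      {ω | ∀ v ∈ V', ∀ A ⊆ V'ᶜ, A.card = j → ω ∉ nbhdEvent ShareKey v A} := by
    intro ω hω v hv A hA hAj hmem
    rw [mem_nbhdEvent] at hmem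
    refine not_kConnected_of_neighbors (v := v) (A := A)
      (fun h => Finset.mem_compl.1 (hA h) hv) (hAj ▸ hj)
      (by rw [hAj, Fintype.card_fin]; omega) (fun w hw => ?_) hω
    exact (hmem w hw.1.symm).1 hw.2
  exact_mod_cast Set.ncard_le_ncard hsub (Set.toFinite _)

end KeyRing

theorem exp_neg_le_one_sub_pow {p : ℝ} (hp0 : 0 ≤ p) (hp : p ≤ 1 / 2) {n r : ℕ} (hr : r ≤ n)
    (hn : 2 * (n * p ^ 2) ≤ 1) : Real.exp (-1) * Real.exp (-(n * p)) ≤ (1 - p) ^ r := by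
  have h1 : 0 < 1 - p := by linarith
  have hbase : Real.exp (-(p + 2 * p ^ 2)) ≤ 1 - p := by
    rw [Real.exp_neg, inv_le_comm₀ (Real.exp_pos _) h1]
    have h2 : (1 - p)⁻¹ ≤ p + 2 * p ^ 2 + 1 := by
      rw [inv_le_iff_one_le_mul₀ h1]
      nlinarith [mul_nonneg (sq_nonneg p) (by linarith : 0 ≤ 1 - 2 * p)]
    exact h2.trans (Real.add_one_le_exp _)
  calc Real.exp (-1) * Real.exp (-(n * p)) = Real.exp (-1 + -(n * p)) := (Real.exp_add _ _).symm
    _ ≤ Real.exp (n * -(p + 2 * p ^ 2)) := Real.exp_le_exp.2 (by nlinarith)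
    _ = Real.exp (-(p + 2 * p ^ 2)) ^ n := Real.exp_nat_mul _ _
    _ ≤ (1 - p) ^ n := by gcongr
    _ ≤ (1 - p) ^ r := pow_le_pow_of_le_one h1.le (by linarith) hr

theorem eventually_log_bounds (j : ℕ) : ∀ᶠ n : ℕ in atTop,
    1 ≤ Real.log n ∧ 8 * Real.log n ^ 2 ≤ n ∧ j * Real.log (Real.log n) ≤ Real.log n := by
  have hlog : Tendsto (fun n : ℕ => Real.log n) atTop atTop :=
    Real.tendsto_log_atTop.comp tendsto_natCast_atTop_atTop
  have h2 : ∀ᶠ n : ℕ in atTop, 8 * Real.log n ^ 2 ≤ n := by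
    have := (Real.isLittleO_pow_log_id_atTop (n := 2)).bound (by norm_num : (0 : ℝ) < 1 / 8)
    filter_upwards [tendsto_natCast_atTop_atTop.eventually this] with n hn
    simp only [id, Real.norm_eq_abs, abs_pow, sq_abs, Nat.abs_cast] at hn
    linarith
  have h3 : ∀ᶠ n : ℕ in atTop, j * Real.log (Real.log n) ≤ Real.log n := by
    have := Real.isLittleO_log_id_atTop.bound (by positivity : (0 : ℝ) < 1 / (j + 1))
    filter_upwards [hlog.eventually this, hlog.eventually_ge_atTop 1] with n hn hn1
    have hlog0 : 0 ≤ Real.log (Real.log n) := Real.log_nonneg hn1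
    rw [id, Real.norm_of_nonneg hlog0, Real.norm_of_nonneg (by linarith), one_div,
      inv_mul_eq_div, le_div_iff₀ (by positivity)] at hn
    nlinarith
  filter_upwards [hlog.eventually_ge_atTop 1, h2, h3] with n a b c using ⟨a, b, c⟩

/-- Below the threshold, the expected number of vertices of a suitable small degree is large. -/
theorem exists_le_expected_low_degree (j : ℕ) : ∃ c : ℝ, 0 < c ∧ ∀ᶠ n : ℕ in atTop, ∀ p α : ℝ,
    0 ≤ p → α ≤ 0 → n * p ≤ Real.log n + j * Real.log (Real.log n) + α →
    ∃ i ≤ j, c * min (Real.exp (-α)) (√n) ≤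
      (n / 2 : ℕ) * ((n - n / 2).choose i) * (p ^ i * (1 - p) ^ (n - 1 - i)) := by
  have hfac : (1 : ℝ) ≤ j.factorial := by exact_mod_cast Nat.factorial_pos j
  refine ⟨Real.exp (-1) / 4 / (8 ^ j * j.factorial), by positivity, ?_⟩
  filter_upwards [eventually_log_bounds j, eventually_ge_atTop (4 * j + 4)]
    with n ⟨hlog1, hlog2, hloglog⟩ hnj p α hp hα hnp
  set l := Real.log n with hl
  have hnj' : 4 * (j : ℝ) + 4 ≤ n := by exact_mod_cast hnj
  have hn0 : (0 : ℝ) < n := by linarith [(Nat.cast_nonneg j : (0 : ℝ) ≤ j)]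
  have hnp2 : n * p ≤ 2 * l := by linarith
  have hp2 : p ≤ 1 / 2 := by
    by_contra! h
    nlinarith
  have hpsq : 2 * (n * p ^ 2) ≤ 1 := by
    have h0 : 0 ≤ n * p := by positivity
    have h1 : (n * p) ^ 2 ≤ (2 * l) ^ 2 := by gcongr
    by_contra! h
    nlinarith
  have hhalf : (n : ℝ) / 4 ≤ (n / 2 : ℕ) := by
    have : n ≤ 4 * (n / 2) := by omega
    have : (n : ℝ) ≤ 4 * (n / 2 : ℕ) := by exact_mod_cast this
    linarith
  have hexpl : Real.exp l = n := Real.exp_log hn0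
  rcases le_total (n * p) (l / 2) with hsmall | hlarge
  · refine ⟨0, Nat.zero_le _, ?_⟩
    rw [Nat.choose_zero_right, Nat.cast_one, mul_one, pow_zero, one_mul]
    have hpow := exp_neg_le_one_sub_pow hp hp2 (by omega : n - 1 - 0 ≤ n) hpsq
    have hsq : √(n : ℝ) = n * Real.exp (-(l / 2)) := by
      rw [Real.sqrt_eq_iff_mul_self_eq hn0.le (by positivity)]
      have : Real.exp (-(l / 2)) * Real.exp (-(l / 2)) = (n : ℝ)⁻¹ := by
        rw [← Real.exp_add, ← hexpl, ← Real.exp_neg]; congr 1; ring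
      rw [mul_mul_mul_comm, this]
      field_simp
    calc _ ≤ Real.exp (-1) / 4 * √n := by
          refine mul_le_mul ?_ (min_le_right _ _) (by positivity) (by positivity)
          exact div_le_self (by positivity)
            (one_le_mul_of_one_le_of_one_le (one_le_pow₀ (by norm_num)) hfac)
      _ = n / 4 * (Real.exp (-1) * Real.exp (-(l / 2))) := by rw [hsq]; ring
      _ ≤ n / 4 * (Real.exp (-1) * Real.exp (-(n * p))) := by gcongr
      _ ≤ _ := by gcongr
  · refine ⟨j, le_rfl, ?_⟩
    have hpow := exp_neg_le_one_sub_pow hp hp2 (by omega : n - 1 - j ≤ n) hpsq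
    have hchoose : ((n : ℝ) / 4) ^ j / j.factorial ≤ (n - n / 2).choose j := by
      refine le_trans ?_ (Nat.pow_le_choose j (n - n / 2))
      have : n ≤ 4 * (n - n / 2 + 1 - j) := by omega
      have : (n : ℝ) ≤ 4 * (n - n / 2 + 1 - j : ℕ) := by exact_mod_cast this
      gcongr
      linarith
    have hexp : Real.exp (-α) / (n * l ^ j) ≤ Real.exp (-(n * p)) := by
      have : Real.exp (-(l + j * Real.log l + α)) = Real.exp (-α) / (n * l ^ j) := by
        rw [show -(l + j * Real.log l + α) = -α - (l + j * Real.log l) by ring, Real.exp_sub,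
          Real.exp_add, hexpl, Real.exp_nat_mul, Real.exp_log (by linarith)]
      rw [← this]
      exact Real.exp_le_exp.2 (by linarith)
    have hl0 : 0 < l := by linarith
    calc _ ≤ Real.exp (-1) / 4 / (8 ^ j * j.factorial) * Real.exp (-α) := by
          gcongr; exact min_le_left _ _
      _ = n / 4 * ((l / 8) ^ j / j.factorial) *
            (Real.exp (-1) * (Real.exp (-α) / (n * l ^ j))) := by
          rw [div_pow]; field_simp
      _ ≤ n / 4 * ((n * p / 4) ^ j / j.factorial) *
            (Real.exp (-1) * Real.exp (-(n * p))) := by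
          gcongr ?_ * (?_ ^ _ / _) * (_ * ?_)
          linarith
      _ = n / 4 * ((n / 4) ^ j / j.factorial) *
            (p ^ j * (Real.exp (-1) * Real.exp (-(n * p)))) := by
          rw [show (n : ℝ) * p / 4 = n / 4 * p by ring, mul_pow]; ring
      _ ≤ _ := by gcongr

/-- zero-law for `k`-connectivity in random key graphs. -/
theorem rkg_zero_law
    (k : ℕ) (hk : 1 ≤ k) (K P : ℕ → ℕ)
    (hKP : ∀ n, K n ≤ P n)
    (hK2 : ∀ᶠ n : ℕ in atTop, 2 ≤ K n)
    (α : ℕ → ℝ)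
    (hα : ∀ n, 1 ≤ n → (K n : ℝ) ^ 2 / (P n : ℝ) =
      (Real.log n + ((k : ℝ) - 1) * Real.log (Real.log n) + α n) / (n : ℝ))
    (hdeg : (∃ ε : ℝ, 0 < ε ∧ ∀ᶠ n : ℕ in atTop,
        ε < (n : ℝ) * ((K n : ℝ) ^ 2 / (P n : ℝ))) ∨
      Tendsto (fun n : ℕ => (n : ℝ) * ((K n : ℝ) ^ 2 / (P n : ℝ))) atTop (nhds 0))
    (hαbot : Tendsto α atTop atBot) :
    Tendsto (fun n : ℕ => rkgMeasure n (K n) (P n)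
        {ω | KConnected (rkgGraph ω) k}) atTop (nhds 0) := by
  obtain ⟨c, hc, hlow⟩ := exists_le_expected_low_degree (k - 1)
  have hkcast : ((k - 1 : ℕ) : ℝ) = (k : ℝ) - 1 := by rw [Nat.cast_sub hk, Nat.cast_one]
  set B : ℕ → ℝ := fun n => 1 / (c * min (Real.exp (-α n)) (√n)) +
    (1 / (1 - 2 * (Real.log n / n)) ^ (2 * k) - 1) with hB
  have hBlim : Tendsto B atTop (nhds 0) := by
    have hmin : Tendsto (fun n : ℕ => min (Real.exp (-α n)) (√n)) atTop atTop :=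
      tendsto_inf_atTop _ (Real.tendsto_exp_atTop.comp (tendsto_neg_atBot_atTop.comp hαbot))
        (Real.tendsto_sqrt_atTop.comp tendsto_natCast_atTop_atTop)
    have h1 : Tendsto (fun n : ℕ => 1 / (c * min (Real.exp (-α n)) (√n))) atTop (nhds 0) := by
      simpa only [one_div, Function.comp_def] using
        tendsto_inv_atTop_zero.comp (hmin.const_mul_atTop hc)
    have h2 : Tendsto (fun n : ℕ => Real.log n / n) atTop (nhds 0) :=
      (Real.isLittleO_log_id_atTop.tendsto_div_nhds_zero).comp tendsto_natCast_atTop_atTop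
    have h3 : Tendsto (fun n : ℕ => 1 / (1 - 2 * (Real.log n / n)) ^ (2 * k) - 1) atTop
        (nhds (1 / (1 - 2 * 0) ^ (2 * k) - 1)) :=
      (tendsto_const_nhds.div ((tendsto_const_nhds.sub (h2.const_mul 2)).pow _)
        (by norm_num)).sub_const 1
    convert h1.add h3 using 2
    norm_num
  have hBlim' : Tendsto (fun n => ENNReal.ofReal (B n)) atTop (nhds 0) := by
    simpa using ENNReal.tendsto_ofReal hBlim
  refine tendsto_of_tendsto_of_tendsto_of_le_of_le' tendsto_const_nhds hBlim'
    (Eventually.of_forall fun _ => zero_le) ?_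
  filter_upwards [hlow, hK2, eventually_log_bounds (k - 1), hαbot.eventually_le_atBot 0,
    eventually_ge_atTop (k + 2)] with n hn hK ⟨hlog1, hlog2, hloglog⟩ hα0 hnk
  have hn0 : (0 : ℝ) < n := by exact_mod_cast (by omega : 0 < n)
  set q : ℝ := ((P n - K n).choose (K n) : ℝ) / ((P n).choose (K n) : ℝ) with hq
  have hpq : 1 - q ≤ (K n : ℝ) ^ 2 / P n := one_sub_choose_div_choose_le (by omega) (hKP n)
  have hq1 : q ≤ 1 := by
    refine div_le_one_of_le₀ ?_ (Nat.cast_nonneg _)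
    exact_mod_cast Nat.choose_le_choose _ (Nat.sub_le _ _)
  have hnp : n * (1 - q) ≤ Real.log n + (k - 1 : ℕ) * Real.log (Real.log n) + α n := by
    rw [hα n (by omega), ← hkcast, le_div_iff₀ hn0] at hpq
    linarith
  set x : ℝ := 1 - 2 * (Real.log n / n) with hx
  have hxq : x ≤ q := by
    have : 1 - q ≤ 2 * Real.log n / n := by rw [le_div_iff₀ hn0]; linarith
    rw [hx, ← mul_div_assoc]; linarith
  have hx0 : 0 < x := by
    have : 2 * Real.log n / n < 1 := by rw [div_lt_one hn0]; nlinarith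
    rw [hx, ← mul_div_assoc]; linarith
  obtain ⟨i, hi, hm⟩ := hn (1 - q) (α n) (by linarith) hα0 hnp
  rw [sub_sub_cancel] at hm
  have hmin0 : 0 < c * min (Real.exp (-α n)) (√n) :=
    mul_pos hc (lt_min (Real.exp_pos _) (Real.sqrt_pos.2 hn0))
  refine (rkgMeasure_kConnected_le (hKP n) hi (by omega) hq (hx0.trans_le hxq) rfl
    (hmin0.trans_le hm)).trans (ENNReal.ofReal_le_ofReal ?_)
  have hpow : x ^ (2 * k) ≤ q ^ (2 * i + 1) :=
    (pow_le_pow_of_le_one hx0.le (hxq.trans hq1) (by omega : 2 * i + 1 ≤ 2 * k)).trans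
      (by gcongr)
  have hinv := one_div_le_one_div_of_le (pow_pos hx0 _) hpow
  have hinv' := one_div_le_one_div_of_le hmin0 hm
  simp only [hB]
  linarith
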